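/- arXiv:1804.04062 — 3 statements merged into one kernel-verified Lean document; each statement's English description precedes it below -/
import Mathlib

section
/- Let K > 1 and ρ ≥ 1, set K̃ = (K² + 1 + √((K²+1)² − 4ρ(2−ρ)K²))/(2ρK) (so K̃ > 1), and let α = (K̃/(K̃² − 1))·((K² − 1)/K). Then the affine map φ(z) = αz + (1 − ρ) maps the disc D_K bijectively onto the disc D_K̃; in particular the image of D_K under φ equals D_K̃. -/
/-- The open disc `D_κ` with center `(κ²+1)/(κ²−1)` and radius `2κ/(κ²−1)`. -/
noncomputable def discDK (κ : ℝ) : Set ℂ :=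
  Metric.ball (((κ^2 + 1) / (κ^2 - 1) : ℝ) : ℂ) (2 * κ / (κ^2 - 1))

/-- For `K > 1`, `ρ ≥ 1`, with
`K̃ = (K² + 1 + √((K²+1)² − 4ρ(2−ρ)K²))/(2ρK)` (which is `> 1`) and
`α = (K̃/(K̃² − 1))·((K² − 1)/K)`, the affine map `z ↦ αz + (1 − ρ)`
maps `D_K` bijectively onto `D_K̃`; in particular the image of `D_K` equals `D_K̃`. -/
theorem affine_bijOn_discDK (K ρ : ℝ) (hK : 1 < K) (hρ : 1 ≤ ρ)
    (Kt : ℝ) (hKt : Kt = (K^2 + 1 + Real.sqrt ((K^2 + 1)^2 - 4*ρ*(2 - ρ)*K^2)) / (2*ρ*K))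
    (α : ℝ) (hα : α = (Kt / (Kt^2 - 1)) * ((K^2 - 1) / K)) :
    Set.BijOn (fun z : ℂ => (α : ℂ) * z + ((1 - ρ : ℝ) : ℂ)) (discDK K) (discDK Kt) ∧
      (fun z : ℂ => (α : ℂ) * z + ((1 - ρ : ℝ) : ℂ)) '' (discDK K) = discDK Kt := by
  have hK0 : 0 < K := by linarith
  have hρ0 : 0 < ρ := by linarith
  have hK2 : 0 < K^2 - 1 := by nlinarith
  have hD : 0 ≤ (K^2 + 1)^2 - 4*ρ*(2 - ρ)*K^2 := by
    nlinarith [sq_nonneg (K^2 - 1), sq_nonneg ((ρ - 1) * K)]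
  have hs := Real.sq_sqrt hD
  have hlt : 2*ρ*K - (K^2 + 1) < Real.sqrt ((K^2 + 1)^2 - 4*ρ*(2 - ρ)*K^2) := by
    apply Real.lt_sqrt_of_sq_lt
    have : 0 < 4 * ρ * K * (K - 1)^2 := by
      have : 0 < K - 1 := by linarith
      positivity
    nlinarith
  set s := Real.sqrt ((K^2 + 1)^2 - 4*ρ*(2 - ρ)*K^2) with hsdef
  have hKt1 : 1 < Kt := by
    rw [hKt, lt_div_iff₀ (by positivity)]
    linarith
  have hs' : s = 2*ρ*K*Kt - (K^2 + 1) := by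
    rw [hKt]; field_simp; ring
  have hquad : ρ*K*Kt^2 - (K^2+1)*Kt + (2-ρ)*K = 0 := by
    rw [hs'] at hs
    have h : (4*ρ*K) * (ρ*K*Kt^2 - (K^2+1)*Kt + (2-ρ)*K) = 0 := by linear_combination hs
    exact (mul_eq_zero.mp h).resolve_left (by positivity)
  have hKt2 : 0 < Kt^2 - 1 := by nlinarith
  have hKt0 : 0 < Kt := by linarith
  have hα0 : 0 < α := by rw [hα]; positivity
  have hr : 2 * Kt / (Kt^2 - 1) = α * (2 * K / (K^2 - 1)) := by
    rw [hα]; field_simp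
  have hc : (Kt^2 + 1) / (Kt^2 - 1) = α * ((K^2 + 1) / (K^2 - 1)) + (1 - ρ) := by
    rw [hα]; field_simp
    linear_combination hquad
  have hαC : (α : ℂ) ≠ 0 := by exact_mod_cast hα0.ne'
  have hmem : ∀ z : ℂ, (α : ℂ) * z + ((1 - ρ : ℝ) : ℂ) ∈ discDK Kt ↔ z ∈ discDK K := by
    intro z
    unfold discDK
    rw [hr, hc, Metric.mem_ball, Metric.mem_ball, Complex.ofReal_add, dist_add_right,
      Complex.ofReal_mul, dist_eq_norm, dist_eq_norm, ← mul_sub, norm_mul, Complex.norm_real,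
      Real.norm_of_nonneg hα0.le]
    exact mul_lt_mul_iff_right₀ hα0
  have hbij : Set.BijOn (fun z : ℂ => (α : ℂ) * z + ((1 - ρ : ℝ) : ℂ)) (discDK K)
      (discDK Kt) := by
    refine ⟨fun z hz => (hmem z).2 hz, ?_, ?_⟩
    · intro a _ b _ h
      exact mul_left_cancel₀ hαC (add_right_cancel h)
    · intro w hw
      have he : (α : ℂ) * ((w - ((1 - ρ : ℝ) : ℂ)) / α) + ((1 - ρ : ℝ) : ℂ) = w := by
        rw [mul_div_cancel₀ _ hαC]; ring
      refine ⟨(w - ((1 - ρ : ℝ) : ℂ)) / α, (hmem _).1 (by rw [he]; exact hw), he⟩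
  exact ⟨hbij, hbij.image_eq⟩
end

section
/- Let K ≥ 1 and ρ ≥ 1. Then (K² + 1)² − 4ρ(2 − ρ)K² ≥ 0, and K̃ := (K² + 1 + √((K²+1)² − 4ρ(2−ρ)K²))/(2ρK) satisfies 1 ≤ K̃ ≤ K; moreover, if K > 1 and ρ > 1 then 1 < K̃ < K. -/
/-- For `K ≥ 1`, `ρ ≥ 1`: the discriminant `(K²+1)² − 4ρ(2−ρ)K²` is
nonnegative, and `K̃ = (K² + 1 + √((K²+1)² − 4ρ(2−ρ)K²))/(2ρK)` satisfies `1 ≤ K̃ ≤ K`;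
if moreover `K > 1` and `ρ > 1`, then `1 < K̃ < K`. -/
theorem kTilde_bounds (K ρ : ℝ) (hK : 1 ≤ K) (hρ : 1 ≤ ρ) :
    0 ≤ (K^2 + 1)^2 - 4*ρ*(2 - ρ)*K^2 ∧
      1 ≤ (K^2 + 1 + Real.sqrt ((K^2 + 1)^2 - 4*ρ*(2 - ρ)*K^2)) / (2*ρ*K) ∧
      (K^2 + 1 + Real.sqrt ((K^2 + 1)^2 - 4*ρ*(2 - ρ)*K^2)) / (2*ρ*K) ≤ K ∧
      (1 < K → 1 < ρ →
        1 < (K^2 + 1 + Real.sqrt ((K^2 + 1)^2 - 4*ρ*(2 - ρ)*K^2)) / (2*ρ*K) ∧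
        (K^2 + 1 + Real.sqrt ((K^2 + 1)^2 - 4*ρ*(2 - ρ)*K^2)) / (2*ρ*K) < K) := by
  have hD : (K^2 + 1)^2 - 4*ρ*(2 - ρ)*K^2 = (K^2 - 1)^2 + (2*K*(ρ - 1))^2 := by ring
  rw [hD]
  have hK0 : 0 < K := by linarith
  have hpos : 0 < 2*ρ*K := by positivity
  have ha : 0 ≤ K^2 - 1 := by nlinarith
  have hb : 0 ≤ ρ - 1 := by linarith
  have hlow : 2*K*(ρ - 1) ≤ Real.sqrt ((K^2 - 1)^2 + (2*K*(ρ - 1))^2) :=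
    Real.le_sqrt_of_sq_le (by nlinarith [sq_nonneg (K^2 - 1)])
  have hid : ((K^2 - 1) + 2*K^2*(ρ - 1))^2 - ((K^2 - 1)^2 + (2*K*(ρ - 1))^2)
      = 4*K^2*(ρ - 1)*(K^2 - 1) * ρ := by ring
  have hm : 0 ≤ (K^2 - 1) + 2*K^2*(ρ - 1) := by positivity
  refine ⟨by positivity, ?_, ?_, fun hK1 hρ1 => ⟨?_, ?_⟩⟩
  · rw [le_div_iff₀ hpos]
    nlinarith [sq_nonneg (K - 1)]
  · rw [div_le_iff₀ hpos]
    have h : Real.sqrt ((K^2 - 1)^2 + (2*K*(ρ - 1))^2) ≤ (K^2 - 1) + 2*K^2*(ρ - 1) := by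
      apply Real.sqrt_le_iff.2 ⟨hm, ?_⟩
      have : 0 ≤ 4*K^2*(ρ - 1)*(K^2 - 1) * ρ := by positivity
      linarith
    nlinarith
  · rw [lt_div_iff₀ hpos]
    nlinarith [mul_pos (sub_pos.2 hK1) (sub_pos.2 hK1)]
  · rw [div_lt_iff₀ hpos]
    have ha' : 0 < K^2 - 1 := by nlinarith
    have hb' : 0 < ρ - 1 := by linarith
    have h : Real.sqrt ((K^2 - 1)^2 + (2*K*(ρ - 1))^2) < (K^2 - 1) + 2*K^2*(ρ - 1) := by
      apply (Real.sqrt_lt' (by positivity)).2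
      have : 0 < 4*K^2*(ρ - 1)*(K^2 - 1) * ρ := by positivity
      linarith
    nlinarith
end

section
/- Let K > 1, set K̃ = (K + K⁻¹)/2 and α = 2K̃(K − 1)/((K̃ − 1)(K + 1)). Then α > 0 and the image of the disc D_K under the map z ↦ αz − 1 equals the disc D_K̃. -/
/-- For `K > 1`, with `K̃ = (K + K⁻¹)/2` and
`α = 2K̃(K − 1)/((K̃ − 1)(K + 1))`, we have `α > 0` and the image of `D_K` under
`z ↦ αz − 1` equals `D_K̃`. -/
theorem image_discDK_eq (K : ℝ) (hK : 1 < K)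
    (Kt : ℝ) (hKt : Kt = (K + K⁻¹) / 2)
    (α : ℝ) (hα : α = 2 * Kt * (K - 1) / ((Kt - 1) * (K + 1))) :
    0 < α ∧ (fun z : ℂ => (α : ℂ) * z - 1) '' discDK K = discDK Kt := by
  have h0 : (0:ℝ) < K := by linarith
  have h1 : 0 < K - 1 := by linarith
  have h2 : 0 < K^2 - 1 := by nlinarith
  have hk1 : Kt - 1 = (K-1)^2 / (2*K) := by rw [hKt]; field_simp; ring
  have hk2 : Kt ^ 2 - 1 = (K^2-1)^2 / (4*K^2) := by rw [hKt]; field_simp; ring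
  have hk : Kt = (K^2+1)/(2*K) := by rw [hKt]; field_simp
  have ha : α = 2*(K^2+1)/(K^2-1) := by
    rw [hα, hk1, hk, show K^2-1 = (K-1)*(K+1) by ring]
    field_simp
  have hpos : 0 < α := by rw [ha]; positivity
  have hr : 2 * Kt / (Kt^2-1) = α * (2 * K / (K^2-1)) := by
    rw [hk2, hk, ha]; field_simp; ring
  have hc : (Kt^2+1) / (Kt^2-1) = α * ((K^2+1) / (K^2-1)) - 1 := by
    rw [hk2, hk, ha]; field_simp; ring
  refine ⟨hpos, ?_⟩
  unfold discDK
  rw [hr, hc]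
  generalize (K^2+1) / (K^2-1) = c
  generalize 2 * K / (K^2-1) = r
  have hne : (α : ℂ) ≠ 0 := by exact_mod_cast hpos.ne'
  have key : ∀ z : ℂ, dist ((α:ℂ) * z - 1) ((α * c - 1 : ℝ) : ℂ) = α * dist z (c : ℂ) := by
    intro z
    rw [dist_eq_norm, dist_eq_norm,
      show (α:ℂ) * z - 1 - ((α * c - 1 : ℝ) : ℂ) = (α : ℂ) * (z - c) by push_cast; ring,
      norm_mul, Complex.norm_real, Real.norm_of_nonneg hpos.le]
  ext w
  simp only [Set.mem_image, Metric.mem_ball]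
  constructor
  · rintro ⟨z, hz, rfl⟩
    rw [key]
    exact mul_lt_mul_of_pos_left hz hpos
  · intro hw
    have e : (α:ℂ) * ((w + 1) / α) - 1 = w := by field_simp; ring
    refine ⟨(w + 1) / α, ?_, e⟩
    rw [← e, key] at hw
    exact lt_of_mul_lt_mul_left hw hpos.le
end
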